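/- Let m and r be integers with 2 ≤ 2r ≤ m−1, and set α = ⌊r/(m−2r)⌋ and t = r mod (m−2r). Let W = W₀ − λW₁ be the m×m skew-symmetric pencil given by the block-diagonal direct sum of t copies of the block M_{α+1} and (m−2r−t) copies of the block M_α, where M_k is the (2k+1)×(2k+1) pencil [[0, F_k], [−F_kᵀ, 0]] − λ[[0, G_k], [−G_kᵀ, 0]] (F_k, G_k being the k×(k+1) superdiagonal-ones and diagonal-ones matrices). Then the set of pairs (A, B) of skew-symmetric m×m complex matrices such that the pencil A − λB has normal rank at most 2r equals the closure, in the space Matrix (Fin m) (Fin m) ℂ × Matrix (Fin m) (Fin m) ℂ, of the congruence orbit { (Sᵀ W₀ S, Sᵀ W₁ S) : S ∈ Matrix (Fin m) (Fin m) ℂ invertible }. -/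

import Mathlib

open Polynomial Matrix

/-- The normal rank of a matrix polynomial: its rank as a matrix over the field of
rational functions ℂ(λ). -/
noncomputable def normalRank {m n : ℕ} (P : Matrix (Fin m) (Fin n) (Polynomial ℂ)) : ℕ :=
  (P.map (algebraMap (Polynomial ℂ) (RatFunc ℂ))).rank

/-- The matrix polynomial `A − λ B` associated with a pencil `(A, B)`. -/
noncomputable def pencilPoly {m : ℕ} (A B : Matrix (Fin m) (Fin m) ℂ) :
    Matrix (Fin m) (Fin m) (Polynomial ℂ) :=
  Matrix.of fun a b => Polynomial.C (A a b) - Polynomial.X * Polynomial.C (B a b)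

/-- The k×(k+1) matrix `F_k` with ones on the superdiagonal. -/
def Fmat (k : ℕ) : Matrix (Fin k) (Fin (k + 1)) ℂ :=
  Matrix.of fun i j => if (j : ℕ) = (i : ℕ) + 1 then 1 else 0

/-- The k×(k+1) matrix `G_k` with ones on the main diagonal. -/
def Gmat (k : ℕ) : Matrix (Fin k) (Fin (k + 1)) ℂ :=
  Matrix.of fun i j => if (j : ℕ) = (i : ℕ) then 1 else 0

/-- The size `2k+1` of the singular block `M_k`. -/
def Msize (k : ℕ) : ℕ := k + (k + 1)

/-- The constant part `[[0, F_k], [−F_kᵀ, 0]]` of the block pencil `M_k`. -/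
noncomputable def MmatA (k : ℕ) : Matrix (Fin (Msize k)) (Fin (Msize k)) ℂ :=
  (Matrix.fromBlocks 0 (Fmat k) (-(Fmat k)ᵀ) 0).submatrix
    finSumFinEquiv.symm finSumFinEquiv.symm

/-- The λ-coefficient `[[0, G_k], [−G_kᵀ, 0]]` of the block pencil `M_k`. -/
noncomputable def MmatB (k : ℕ) : Matrix (Fin (Msize k)) (Fin (Msize k)) ℂ :=
  (Matrix.fromBlocks 0 (Gmat k) (-(Gmat k)ᵀ) 0).submatrix
    finSumFinEquiv.symm finSumFinEquiv.symm

/-- The parameter of the `i`-th block of the generic pencil `W`: `α + 1` for the first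
`t` blocks and `α` for the remaining ones, with `α = ⌊r/(m−2r)⌋` and `t = r mod (m−2r)`. -/
def Wpar (m r : ℕ) (i : Fin (m - 2 * r)) : ℕ :=
  if (i : ℕ) < r % (m - 2 * r) then r / (m - 2 * r) + 1 else r / (m - 2 * r)

/-- The block sizes of the generic pencil `W`. -/
def Wsize (m r : ℕ) (i : Fin (m - 2 * r)) : ℕ := Msize (Wpar m r i)

/-- The constant part of block `i` of the generic pencil `W`. -/
noncomputable def WblkA (m r : ℕ) (i : Fin (m - 2 * r)) :
    Matrix (Fin (Wsize m r i)) (Fin (Wsize m r i)) ℂ := MmatA (Wpar m r i)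

/-- The λ-coefficient of block `i` of the generic pencil `W`. -/
noncomputable def WblkB (m r : ℕ) (i : Fin (m - 2 * r)) :
    Matrix (Fin (Wsize m r i)) (Fin (Wsize m r i)) ℂ := MmatB (Wpar m r i)


section IsoPart
open Module

variable {V : Type*} [AddCommGroup V] [Module ℂ V] [FiniteDimensional ℂ V]

lemma fr_map_inj {V W : Type*} [AddCommGroup V] [Module ℂ V] [AddCommGroup W] [Module ℂ W] {f : V →ₗ[ℂ] W}
    (hf : Function.Injective f) (p : Submodule ℂ V) : finrank ℂ (p.map f) = finrank ℂ p :=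
  (Submodule.equivMapOfInjective f hf p).finrank_eq.symm

lemma iso_ext (A B : V →ₗ[ℂ] Dual ℂ V) (hA : ∀ x, A x x = 0) (hB : ∀ x, B x x = 0)
    (U : Submodule ℂ V) (hUA : ∀ x ∈ U, ∀ y ∈ U, A x y = 0) (hUB : ∀ x ∈ U, ∀ y ∈ U, B x y = 0)
    (hAB : U.map A ≤ U.map B)
    (half : ∀ C : Submodule ℂ V, C ⊓ U = ⊥ → ∃ L : Submodule ℂ V, L ≤ C ∧
      (∀ x ∈ L, ∀ y ∈ L, A x y = 0 ∧ B x y = 0) ∧ finrank ℂ C ≤ 2 * finrank ℂ L) :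
    ∃ L : Submodule ℂ V, (∀ x ∈ L, ∀ y ∈ L, A x y = 0 ∧ B x y = 0) ∧
      finrank ℂ V + finrank ℂ U ≤ 2 * finrank ℂ L + finrank ℂ (U.map B) := by
  have sA : ∀ x y, A x y = - A y x := by
    intro x y
    have := hA (x + y)
    simp [hA] at this
    linear_combination this
  have sB : ∀ x y, B x y = - B y x := by
    intro x y
    have := hB (x + y)
    simp [hB] at this
    linear_combination this
  set W := (U.map B).dualCoannihilator with hW
  have hWB : ∀ x ∈ U, ∀ y ∈ W, B x y = 0 := by
    intro x hx y hy
    rw [hW, Submodule.mem_dualCoannihilator] at hy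
    exact hy _ (Submodule.mem_map_of_mem hx)
  have hWA : ∀ x ∈ U, ∀ y ∈ W, A x y = 0 := by
    intro x hx y hy
    rw [hW, Submodule.mem_dualCoannihilator] at hy
    exact hy _ (hAB (Submodule.mem_map_of_mem hx))
  have hUW : U ≤ W := by
    intro y hy
    rw [hW, Submodule.mem_dualCoannihilator]
    rintro _ ⟨x, hx, rfl⟩
    exact hUB x hx y hy
  have hdim : finrank ℂ (U.map B) + finrank ℂ W = finrank ℂ V :=
    Subspace.finrank_add_finrank_dualCoannihilator_eq _
  obtain ⟨C', hC'⟩ := Submodule.exists_isCompl U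
  set C := C' ⊓ W with hC
  have hCU : C ⊓ U = ⊥ := by
    have := hC'.disjoint.eq_bot
    rw [eq_bot_iff] at this ⊢
    exact fun x hx => this ⟨hx.2, hx.1.1⟩
  have hsup : W ≤ U ⊔ C := by
    intro w hw
    have : w ∈ U ⊔ C' := by rw [hC'.sup_eq_top]; trivial
    obtain ⟨u, hu, c, hc, rfl⟩ := Submodule.mem_sup.1 this
    refine Submodule.mem_sup.2 ⟨u, hu, c, ⟨hc, ?_⟩, rfl⟩
    have := W.sub_mem hw (hUW hu)
    simpa using this
  obtain ⟨L, hLC, hL, hd⟩ := half C hCU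
  refine ⟨U ⊔ L, ?_, ?_⟩
  · intro x hx y hy
    obtain ⟨u, hu, l, hl, rfl⟩ := Submodule.mem_sup.1 hx
    obtain ⟨u', hu', l', hl', rfl⟩ := Submodule.mem_sup.1 hy
    have h1 := hL l hl l' hl'
    have hlW : l ∈ W := (hLC hl).2
    have hlW' : l' ∈ W := (hLC hl').2
    constructor
    · simp [hUA u hu u' hu', h1.1, hWA u hu l' hlW', sA l u', hWA u' hu' l hlW]
    · simp [hUB u hu u' hu', h1.2, hWB u hu l' hlW', sB l u', hWB u' hu' l hlW]
  · have h1 := Submodule.finrank_sup_add_finrank_inf_eq U L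
    have h2 : U ⊓ L = ⊥ := by
      rw [eq_bot_iff, ← hCU]
      exact fun x hx => ⟨hLC hx.2, hx.1⟩
    rw [h2, finrank_bot] at h1
    have h3 := Submodule.finrank_mono hsup
    have h4 := Submodule.finrank_add_le_finrank_add_finrank U C
    omega

lemma iso_half (n : ℕ) (A B : V →ₗ[ℂ] Dual ℂ V) (hA : ∀ x, A x x = 0) (hB : ∀ x, B x x = 0)
    (C : Submodule ℂ V) (hn : finrank ℂ C = n) :
    ∃ L : Submodule ℂ V, L ≤ C ∧
      (∀ x ∈ L, ∀ y ∈ L, A x y = 0 ∧ B x y = 0) ∧ finrank ℂ C ≤ 2 * finrank ℂ L := by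
  induction n using Nat.strong_induction_on generalizing C with
  | _ n ih =>
  rcases Nat.eq_zero_or_pos n with h0 | h0
  · exact ⟨⊥, bot_le, by simp, by omega⟩
  -- restrict
  let A' : C →ₗ[ℂ] Dual ℂ C := C.subtype.dualMap ∘ₗ A ∘ₗ C.subtype
  let B' : C →ₗ[ℂ] Dual ℂ C := C.subtype.dualMap ∘ₗ B ∘ₗ C.subtype
  have hA' : ∀ x, A' x x = 0 := fun x => hA x
  have hB' : ∀ x, B' x x = 0 := fun x => hB x
  have half : ∀ U : Submodule ℂ C, U ≠ ⊥ → ∀ D : Submodule ℂ C, D ⊓ U = ⊥ → ∃ L : Submodule ℂ C, L ≤ D ∧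
      (∀ x ∈ L, ∀ y ∈ L, A' x y = 0 ∧ B' x y = 0) ∧ finrank ℂ D ≤ 2 * finrank ℂ L := by
    intro U hU D hD
    have hlt : finrank ℂ D < finrank ℂ C := by
      apply Submodule.finrank_lt
      rintro rfl
      exact hU (by simpa using hD)
    have hfr : finrank ℂ (D.map C.subtype) = finrank ℂ D :=
      fr_map_inj C.injective_subtype D
    obtain ⟨L, hL1, hL2, hL3⟩ := ih (finrank ℂ D) (by omega) (D.map C.subtype) hfr
    refine ⟨L.comap C.subtype, ?_, fun x hx y hy => hL2 x hx y hy, ?_⟩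
    · intro x hx
      obtain ⟨y, hy, hxy⟩ := hL1 hx
      have : y = x := Subtype.ext hxy
      exact this ▸ hy
    · have : finrank ℂ (L.comap C.subtype) = finrank ℂ L := by
        rw [← fr_map_inj C.injective_subtype, Submodule.map_comap_eq]
        rw [inf_eq_right.2]
        rw [Submodule.range_subtype]
        exact hL1.trans (by rw [Submodule.map_le_iff_le_comap]; intro x _; exact x.2)
      omega
  suffices h : ∃ L : Submodule ℂ C, (∀ x ∈ L, ∀ y ∈ L, A' x y = 0 ∧ B' x y = 0) ∧
      finrank ℂ C ≤ 2 * finrank ℂ L by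
    obtain ⟨L, h1, h2⟩ := h
    refine ⟨L.map C.subtype, ?_, ?_, ?_⟩
    · rw [Submodule.map_le_iff_le_comap]; intro x _; exact x.2
    · rintro _ ⟨x, hx, rfl⟩ _ ⟨y, hy, rfl⟩
      exact h1 x hx y hy
    · rwa [fr_map_inj C.injective_subtype]
  have : Nontrivial C := Module.nontrivial_of_finrank_pos (R := ℂ) (by omega)
  -- common step
  have key : ∀ (A₁ B₁ : C →ₗ[ℂ] Dual ℂ C), (∀ x, A₁ x x = 0) → (∀ x, B₁ x x = 0) →
      (∀ U : Submodule ℂ C, U ≠ ⊥ → ∀ D : Submodule ℂ C, D ⊓ U = ⊥ → ∃ L : Submodule ℂ C, L ≤ D ∧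
      (∀ x ∈ L, ∀ y ∈ L, A₁ x y = 0 ∧ B₁ x y = 0) ∧ finrank ℂ D ≤ 2 * finrank ℂ L) →
      (∃ x : C, x ≠ 0 ∧ ∃ μ : ℂ, A₁ x = μ • B₁ x) →
      ∃ L : Submodule ℂ C, (∀ x ∈ L, ∀ y ∈ L, A₁ x y = 0 ∧ B₁ x y = 0) ∧
      finrank ℂ C ≤ 2 * finrank ℂ L := by
    rintro A₁ B₁ hA₁ hB₁ hh ⟨x, hx, μ, hμ⟩
    obtain ⟨L, h1, h2⟩ := iso_ext A₁ B₁ hA₁ hB₁ (ℂ ∙ x) (by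
        intro y hy z hz
        obtain ⟨a, rfl⟩ := Submodule.mem_span_singleton.1 hy
        obtain ⟨b, rfl⟩ := Submodule.mem_span_singleton.1 hz
        simp [hA₁]) (by
        intro y hy z hz
        obtain ⟨a, rfl⟩ := Submodule.mem_span_singleton.1 hy
        obtain ⟨b, rfl⟩ := Submodule.mem_span_singleton.1 hz
        simp [hB₁]) (by
        rw [Submodule.map_span, Set.image_singleton, Submodule.span_singleton_le_iff_mem, hμ]
        exact Submodule.smul_mem _ _ (Submodule.mem_map_of_mem (Submodule.mem_span_singleton_self x)))
        (hh _ (by simpa using hx))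
    refine ⟨L, h1, ?_⟩
    have := Submodule.finrank_map_le B₁ (ℂ ∙ x)
    omega
  by_cases hinj : Function.Injective B'
  · have hbij : Function.Bijective B' := by
      refine ⟨hinj, ?_⟩
      exact (LinearMap.injective_iff_surjective_of_finrank_eq_finrank
        (Subspace.dual_finrank_eq (K := ℂ) (V := C)).symm).1 hinj
    let e := LinearEquiv.ofBijective B' hbij
    obtain ⟨μ, hμ⟩ := Module.End.exists_eigenvalue (e.symm.toLinearMap ∘ₗ A')
    obtain ⟨x, hx⟩ := hμ.exists_hasEigenvector
    refine key A' B' hA' hB' half ⟨x, hx.2, μ, ?_⟩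
    have := hx.apply_eq_smul
    have h3 := congrArg e this
    simpa [e] using h3
  · rw [← LinearMap.ker_eq_bot, Submodule.eq_bot_iff] at hinj
    push Not at hinj
    obtain ⟨x, hx, hx0⟩ := hinj
    obtain ⟨L, h1, h2⟩ := key B' A' hB' hA' (by
      intro U hU D hD
      obtain ⟨L, h1, h2, h3⟩ := half U hU D hD
      exact ⟨L, h1, fun x hx y hy => (h2 x hx y hy).symm, h3⟩) ⟨x, hx0, 0, by simpa using hx⟩
    exact ⟨L, fun x hx y hy => (h1 x hx y hy).symm, h2⟩

lemma iso_main (s : ℕ) (A B : V →ₗ[ℂ] Dual ℂ V) (hA : ∀ x, A x x = 0) (hB : ∀ x, B x x = 0)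
    (hr : ∀ μ : ℂ, finrank ℂ V ≤ 2 * s + finrank ℂ (LinearMap.ker (A - μ • B))) :
    ∃ L : Submodule ℂ V, (∀ x ∈ L, ∀ y ∈ L, A x y = 0 ∧ B x y = 0) ∧
      finrank ℂ V ≤ finrank ℂ L + s := by
  have sB : ∀ x y, B x y = - B y x := by
    intro x y
    have := hB (x + y)
    simp [hB] at this
    linear_combination this
  have sA : ∀ x y, A x y = - A y x := by
    intro x y
    have := hA (x + y)
    simp [hA] at this
    linear_combination this
  let K : ℂ → Submodule ℂ V := fun μ => LinearMap.ker (A - μ • B)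
  have hK : ∀ μ x, x ∈ K μ ↔ A x = μ • B x := by
    intro μ x
    simp [K, sub_eq_zero]
  let US : Finset ℂ → Submodule ℂ V := fun F => ⨆ μ : {μ : ℂ // μ ∉ F}, K μ
  have hKU : ∀ F μ, μ ∉ F → K μ ≤ US F := fun F μ h => le_iSup (fun μ : {μ : ℂ // μ ∉ F} => K μ) ⟨μ, h⟩
  have hmono : ∀ F G, F ⊆ G → US G ≤ US F := by
    intro F G h
    exact iSup_le fun μ => hKU F μ (fun hh => μ.2 (h hh))
  obtain ⟨F, hF⟩ : ∃ F, ∀ G, finrank ℂ (US F) ≤ finrank ℂ (US G) := by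
    exact ⟨Function.argmin (fun F => finrank ℂ (US F)),
      fun G => Function.argmin_le (fun F => finrank ℂ (US F)) G⟩
  have hst : ∀ G, F ⊆ G → US G = US F := fun G h =>
    Submodule.eq_of_le_of_finrank_le (hmono F G h) (hF G)
  set U := US F with hU
  have horth : ∀ μ ν, μ ≠ ν → ∀ x ∈ K μ, ∀ y ∈ K ν, B x y = 0 := by
    intro μ ν hne x hx y hy
    rw [hK] at hx hy
    have h1 : A x y = μ * B x y := by rw [hx]; simp
    have h2 : A y x = ν * B y x := by rw [hy]; simp
    rw [sA, sB y x] at h2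
    have : (μ - ν) * B x y = 0 := by linear_combination -h1 - h2
    exact (mul_eq_zero.1 this).resolve_left (sub_ne_zero.2 hne)
  have horthU : ∀ μ, μ ∉ F → ∀ x ∈ K μ, ∀ y ∈ U, B x y = 0 := by
    intro μ hμ x hx y hy
    rw [← hst (insert μ F) (Finset.subset_insert _ _)] at hy
    have : US (insert μ F) ≤ LinearMap.ker (B x) := by
      refine iSup_le fun ν => ?_
      intro z hz
      have : μ ≠ ν := by
        intro h
        exact ν.2 (h ▸ Finset.mem_insert_self _ _)
      exact horth μ ν this x hx z hz
    exact this hy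
  have hUB : ∀ x ∈ U, ∀ y ∈ U, B x y = 0 := by
    intro x hx y hy
    have : U ≤ LinearMap.ker (B y) := by
      refine iSup_le fun ν => ?_
      intro z hz
      rw [LinearMap.mem_ker, sB, horthU ν ν.2 z hz y hy, neg_zero]
    rw [sB, this hx, neg_zero]
  have hAB : U.map A ≤ U.map B := by
    rw [Submodule.map_le_iff_le_comap]
    refine iSup_le fun ν => ?_
    intro z hz
    rw [Submodule.mem_comap, (hK _ _).1 hz]
    exact Submodule.smul_mem _ _ (Submodule.mem_map_of_mem (hKU F ν ν.2 hz))
  have hUA : ∀ x ∈ U, ∀ y ∈ U, A x y = 0 := by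
    intro x hx y hy
    obtain ⟨z, hz, hzx⟩ := hAB (Submodule.mem_map_of_mem hx)
    rw [← hzx]
    exact hUB z hz y hy
  obtain ⟨L, h1, h2⟩ := iso_ext A B hA hB U hUA hUB hAB (fun C _ => iso_half _ A B hA hB C rfl)
  refine ⟨L, h1, ?_⟩
  obtain ⟨μ, hμ⟩ := Infinite.exists_notMem_finset F
  have hmap : U.map B ≤ U.map (A - μ • B) := by
    rw [Submodule.map_le_iff_le_comap, ← hst (insert μ F) (Finset.subset_insert _ _)]
    refine iSup_le fun ν => ?_
    intro z hz
    have hne : (ν : ℂ) - μ ≠ 0 := by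
      intro h
      have h' := sub_eq_zero.1 h
      exact ν.2 (by rw [h']; exact Finset.mem_insert_self _ _)
    refine ⟨((ν : ℂ) - μ)⁻¹ • z, Submodule.smul_mem _ _ (hKU _ ν ν.2 hz), ?_⟩
    have := (hK _ _).1 hz
    simp [this, ← sub_smul, smul_smul, hne]
  have h3 := Submodule.finrank_mono hmap
  have h4 : finrank ℂ (U.map (A - μ • B)) + finrank ℂ (K μ) ≤ finrank ℂ U := by
    have h5 := LinearMap.finrank_range_add_finrank_ker ((A - μ • B).domRestrict U)
    rw [LinearMap.range_domRestrict] at h5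
    have h6 : finrank ℂ (LinearMap.ker ((A - μ • B).domRestrict U)) = finrank ℂ (K μ) := by
      rw [LinearMap.ker_domRestrict]
      exact (Submodule.comapSubtypeEquivOfLe (hKU F μ hμ)).finrank_eq
    omega
  have h7 := hr μ
  change _ ≤ 2 * s + finrank ℂ (K μ) at h7
  omega

end IsoPart

section RankPart

lemma exists_rows {K m n : Type*} [Field K] [Fintype m] [Fintype n] (M : Matrix m n K) (k : ℕ)
    (hk : k ≤ M.rank) : ∃ f : Fin k → m, LinearIndependent K (M.submatrix f id).row := by
  rw [Matrix.rank_eq_finrank_span_row] at hk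
  obtain ⟨f, h1, -, h3⟩ := Submodule.exists_fun_fin_finrank_span_eq K (Set.range M.row)
  choose g hg using h1
  refine ⟨fun i => g (Fin.castLE hk i), ?_⟩
  have := h3.comp (Fin.castLE hk) (Fin.castLE_injective hk)
  have he : (M.submatrix (fun i => g (Fin.castLE hk i)) id).row = f ∘ Fin.castLE hk := by
    funext i
    simp only [Function.comp]
    rw [← hg]
    rfl
  rw [he]
  exact this

lemma exists_minor {K m n : Type*} [Field K] [Fintype m] [Fintype n] (M : Matrix m n K) (k : ℕ)
    (hk : k ≤ M.rank) : ∃ (f : Fin k → m) (g : Fin k → n), (M.submatrix f g).det ≠ 0 := by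
  obtain ⟨f, hf⟩ := exists_rows M k hk
  have h1 : k ≤ (M.submatrix f id)ᵀ.rank := by
    rw [Matrix.rank_transpose, hf.rank_matrix, Fintype.card_fin]
  obtain ⟨g, hg⟩ := exists_rows _ k h1
  refine ⟨f, g, ?_⟩
  rw [Matrix.linearIndependent_rows_iff_isUnit, Matrix.isUnit_iff_isUnit_det] at hg
  have := hg.ne_zero
  rwa [← Matrix.det_transpose] at this

lemma rank_of_minor {K m n : Type*} [Field K] [Fintype m] [Fintype n] (M : Matrix m n K) (k : ℕ)
    (f : Fin k → m) (g : Fin k → n) (h : (M.submatrix f g).det ≠ 0) : k ≤ M.rank := by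
  have h1 := Matrix.rank_of_det_ne_zero h
  have h2 := Matrix.rank_submatrix_le M f g
  rw [Fintype.card_fin] at h1
  omega

lemma eval_pencil_minor {m k : ℕ} (A B : Matrix (Fin m) (Fin m) ℂ) (f g : Fin k → Fin m) (μ : ℂ) :
    (((pencilPoly A B).submatrix f g).det).eval μ = ((A - μ • B).submatrix f g).det := by
  rw [← Polynomial.coe_evalRingHom, RingHom.map_det]
  congr 1
  ext i j
  simp [pencilPoly]
  ring

lemma ratfunc_minor {m k : ℕ} (P : Matrix (Fin m) (Fin m) (Polynomial ℂ)) (f g : Fin k → Fin m) :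
    ((P.map (algebraMap (Polynomial ℂ) (RatFunc ℂ))).submatrix f g).det =
      algebraMap (Polynomial ℂ) (RatFunc ℂ) (P.submatrix f g).det := by
  rw [RingHom.map_det]
  rfl

lemma rank_le_of_normalRank {m k : ℕ} (A B : Matrix (Fin m) (Fin m) ℂ)
    (h : normalRank (pencilPoly A B) ≤ k) (μ : ℂ) : (A - μ • B).rank ≤ k := by
  by_contra hc
  obtain ⟨f, g, hfg⟩ := exists_minor (A - μ • B) (k + 1) (by omega)
  rw [← eval_pencil_minor] at hfg
  have : (((pencilPoly A B).map (algebraMap (Polynomial ℂ) (RatFunc ℂ))).submatrix f g).det ≠ 0 := by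
    rw [ratfunc_minor]
    intro h0
    rw [map_eq_zero_iff _ (RatFunc.algebraMap_injective ℂ)] at h0
    rw [h0] at hfg
    simp at hfg
  have := rank_of_minor _ _ f g this
  unfold normalRank at h
  omega

lemma normalRank_le_of_closure {m k : ℕ} (O : Set (Matrix (Fin m) (Fin m) ℂ × Matrix (Fin m) (Fin m) ℂ))
    (hO : ∀ AB ∈ O, ∀ μ : ℂ, (AB.1 - μ • AB.2).rank ≤ k)
    (AB : Matrix (Fin m) (Fin m) ℂ × Matrix (Fin m) (Fin m) ℂ) (h : AB ∈ closure O) :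
    normalRank (pencilPoly AB.1 AB.2) ≤ k := by
  by_contra hc
  obtain ⟨f, g, hfg⟩ := exists_minor ((pencilPoly AB.1 AB.2).map
    (algebraMap (Polynomial ℂ) (RatFunc ℂ))) (k + 1) (by unfold normalRank at hc; omega)
  rw [ratfunc_minor, map_ne_zero_iff _ (RatFunc.algebraMap_injective ℂ)] at hfg
  obtain ⟨μ, hμ⟩ : ∃ μ, (((pencilPoly AB.1 AB.2).submatrix f g).det).eval μ ≠ 0 := by
    by_contra hh
    push Not at hh
    exact hfg (Polynomial.funext (by simpa using hh))
  rw [eval_pencil_minor] at hμ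
  have hcont : Continuous fun AB : Matrix (Fin m) (Fin m) ℂ × Matrix (Fin m) (Fin m) ℂ =>
      ((AB.1 - μ • AB.2).submatrix f g).det := by fun_prop
  have hopen : IsOpen {AB : Matrix (Fin m) (Fin m) ℂ × Matrix (Fin m) (Fin m) ℂ |
      ((AB.1 - μ • AB.2).submatrix f g).det ≠ 0} := isOpen_ne_fun hcont continuous_const
  obtain ⟨AB', h1, h2⟩ := mem_closure_iff.1 h _ hopen hμ
  have := rank_of_minor _ _ f g h1
  have := hO _ h2 μ
  omega

end RankPart

section DensePart

/-- quadratic perturbation of a surjective linear map is locally onto -/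
lemma quad_open {E F : Type*} [NormedAddCommGroup E] [NormedSpace ℂ E] [FiniteDimensional ℂ E]
    [NormedAddCommGroup F] [NormedSpace ℂ F] [FiniteDimensional ℂ F]
    (P : F) (D : E →ₗ[ℂ] F) (hD : Function.Surjective D) (Q : E →ₗ[ℂ] E →ₗ[ℂ] F) :
    Filter.map (fun h => P + D h + Q h h) (nhds 0) = nhds P := by
  have : CompleteSpace E := FiniteDimensional.complete ℂ E
  have : CompleteSpace F := FiniteDimensional.complete ℂ F
  let D' : E →L[ℂ] F := LinearMap.toContinuousLinearMap D
  let Q' : E →L[ℂ] E →L[ℂ] F := LinearMap.toContinuousLinearMap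
    ((LinearMap.toContinuousLinearMap (𝕜 := ℂ) (E := E) (F' := F)).toLinearMap ∘ₗ Q)
  have hQ : ∀ x y, Q' x y = Q x y := fun x y => rfl
  have h1 : HasStrictFDerivAt (fun h : E => Q' h h) (0 : E →L[ℂ] F) (0 : E) := by
    have := (Q'.hasStrictFDerivAt (x := (0:E))).clm_apply (hasStrictFDerivAt_id (0:E))
    refine this.congr_fderiv ?_
    ext x
    simp
  have h2 : HasStrictFDerivAt (fun h : E => P + D' h + Q' h h) D' (0 : E) := by
    have := ((D'.hasStrictFDerivAt (x := (0:E))).const_add P).add h1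
    refine this.congr_fderiv (by simp)
  have h3 := h2.map_nhds_eq_of_surj (LinearMap.range_eq_top.2 hD)
  have h4 : P + D' 0 + Q' 0 0 = P := by simp
  rw [h4] at h3
  exact h3

/-- pencils of surjective linear maps -/
lemma surj_cofinite {E F : Type*} [AddCommGroup E] [Module ℂ E]
    [AddCommGroup F] [Module ℂ F] [FiniteDimensional ℂ F]
    (D : ℂ → E →ₗ[ℂ] F) (hD : ∀ t, D t = (1 - t) • D 0 + t • D 1)
    (h1 : Function.Surjective (D 1)) : {t | ¬ Function.Surjective (D t)}.Finite := by
  obtain ⟨R, hR⟩ := (D 1).exists_rightInverse_of_surjective (LinearMap.range_eq_top.2 h1)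
  let b := Module.finBasis ℂ F
  let M := LinearMap.toMatrix b b (D 0 ∘ₗ R)
  let p : Polynomial ℂ := (M.map (fun x : ℂ => ((1 - X) * C x : Polynomial ℂ)) + (X : Polynomial ℂ) • (1 : Matrix _ _ (Polynomial ℂ))).det
  have hp : ∀ t, p.eval t = LinearMap.det (D t ∘ₗ R) := by
    intro t
    rw [← LinearMap.det_toMatrix b, hD t, LinearMap.add_comp, LinearMap.smul_comp,
      LinearMap.smul_comp, hR, map_add, map_smul, map_smul, LinearMap.toMatrix_id,
      ← Polynomial.coe_evalRingHom, RingHom.map_det]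
    congr 1
    ext i j
    by_cases h : i = j <;> simp [M, Matrix.one_apply, h]
  have hp0 : p ≠ 0 := by
    intro h
    have := hp 1
    rw [h, hR] at this
    simp at this
  refine (Polynomial.finite_setOf_isRoot hp0).subset ?_
  intro t ht
  simp only [Set.mem_setOf_eq, Polynomial.IsRoot]
  rw [hp]
  by_contra hne
  apply ht
  have : Function.Surjective (D t ∘ₗ R) := by
    have h3 := (LinearMap.equivOfDetNeZero _ hne).surjective
    exact h3
  intro y
  obtain ⟨x, hx⟩ := this y
  exact ⟨R x, hx⟩

variable {ι κ : Type*} [Fintype ι] [Fintype κ] [DecidableEq ι] [DecidableEq κ]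

/-- block pencil coordinates -/
abbrev PB (ι κ : Type*) := (Matrix ι ι ℂ × Matrix ι ι ℂ) × (Matrix ι κ ℂ × Matrix ι κ ℂ)
/-- parameters -/
abbrev PE (ι κ : Type*) := (Matrix ι ι ℂ × Matrix κ ι ℂ × Matrix κ κ ℂ) × (Matrix ι ι ℂ × Matrix ι ι ℂ)

def blk (K : Matrix ι ι ℂ) (C : Matrix ι κ ℂ) : Matrix (ι ⊕ κ) (ι ⊕ κ) ℂ :=
  Matrix.fromBlocks (K - Kᵀ) C (-Cᵀ) 0

def Cong {n : Type*} [Fintype n] [DecidableEq n] (P P' : Matrix n n ℂ × Matrix n n ℂ) : Prop :=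
  ∃ S : Matrix n n ℂ, IsUnit S ∧ P'.1 = Sᵀ * P.1 * S ∧ P'.2 = Sᵀ * P.2 * S

lemma Cong.trans {n : Type*} [Fintype n] [DecidableEq n] {P P' P'' : Matrix n n ℂ × Matrix n n ℂ}
    (h : Cong P P') (h' : Cong P' P'') : Cong P P'' := by
  obtain ⟨S, hS, h1, h2⟩ := h
  obtain ⟨T, hT, h3, h4⟩ := h'
  refine ⟨S * T, hS.mul hT, ?_, ?_⟩
  · rw [h3, h1, Matrix.transpose_mul]; simp only [Matrix.mul_assoc]
  · rw [h4, h2, Matrix.transpose_mul]; simp only [Matrix.mul_assoc]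

lemma Cong.symm {n : Type*} [Fintype n] [DecidableEq n] {P P' : Matrix n n ℂ × Matrix n n ℂ}
    (h : Cong P P') : Cong P' P := by
  obtain ⟨S, hS, h1, h2⟩ := h
  have hd := (Matrix.isUnit_iff_isUnit_det S).1 hS
  have key : ∀ M : Matrix n n ℂ, M = S⁻¹ᵀ * (Sᵀ * M * S) * S⁻¹ := by
    intro M
    have h5 : S⁻¹ᵀ * Sᵀ = 1 := by
      rw [← Matrix.transpose_mul, Matrix.mul_nonsing_inv _ hd, Matrix.transpose_one]
    calc M = (S⁻¹ᵀ * Sᵀ) * M * (S * S⁻¹) := by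
          rw [h5, Matrix.mul_nonsing_inv _ hd, Matrix.one_mul, Matrix.mul_one]
      _ = _ := by simp only [Matrix.mul_assoc]
  refine ⟨S⁻¹, ?_, ?_, ?_⟩
  · rw [Matrix.isUnit_iff_isUnit_det]
    exact Matrix.isUnit_nonsing_inv_det _ hd
  · rw [h1]; exact key _
  · rw [h2]; exact key _

def real (P : PB ι κ) : Matrix (ι ⊕ κ) (ι ⊕ κ) ℂ × Matrix (ι ⊕ κ) (ι ⊕ κ) ℂ :=
  (blk P.1.1 P.2.1, blk P.1.2 P.2.2)

/-- derivative -/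
def Dm (P : PB ι κ) : PE ι κ →ₗ[ℂ] PB ι κ where
  toFun h := ((h.1.1ᵀ * P.1.1 + P.1.1 * h.1.1 + P.2.1 * h.1.2.1 + h.2.1 + h.2.1ᵀ,
               h.1.1ᵀ * P.1.2 + P.1.2 * h.1.1 + P.2.2 * h.1.2.1 + h.2.2 + h.2.2ᵀ),
              (h.1.1ᵀ * P.2.1 + P.2.1 * h.1.2.2, h.1.1ᵀ * P.2.2 + P.2.2 * h.1.2.2))
  map_add' x y := by
    ext <;> simp [Matrix.mul_add, Matrix.add_mul] <;> ring
  map_smul' c x := by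
    ext <;> simp [mul_add]

/-- quadratic part -/
def Qm (P : PB ι κ) : PE ι κ →ₗ[ℂ] PE ι κ →ₗ[ℂ] PB ι κ :=
  LinearMap.mk₂ ℂ (fun h g => ((h.1.1ᵀ * P.1.1 * g.1.1 + h.1.1ᵀ * P.2.1 * g.1.2.1,
               h.1.1ᵀ * P.1.2 * g.1.1 + h.1.1ᵀ * P.2.2 * g.1.2.1),
              (h.1.1ᵀ * P.2.1 * g.1.2.2, h.1.1ᵀ * P.2.2 * g.1.2.2)))
    (by intro x y z; ext <;> simp [Matrix.mul_add, Matrix.add_mul] <;> ring)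
    (by intro c x y; ext <;> simp [mul_add])
    (by intro x y z; ext <;> simp [Matrix.mul_add, Matrix.add_mul] <;> ring)
    (by intro c x y; ext <;> simp [mul_add])

def Sm (h : PE ι κ) : Matrix (ι ⊕ κ) (ι ⊕ κ) ℂ :=
  Matrix.fromBlocks (1 + h.1.1) 0 h.1.2.1 (1 + h.1.2.2)

lemma blk_cong (K : Matrix ι ι ℂ) (C : Matrix ι κ ℂ) (x : Matrix ι ι ℂ) (z : Matrix κ ι ℂ)
    (d : Matrix κ κ ℂ) (Y : Matrix ι ι ℂ) :
    blk (K + (xᵀ * K + K * x + C * z + Y + Yᵀ) + (xᵀ * K * x + xᵀ * C * z))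
      (C + (xᵀ * C + C * d) + xᵀ * C * d) =
    (Matrix.fromBlocks (1 + x) 0 z (1 + d))ᵀ * blk K C * Matrix.fromBlocks (1 + x) 0 z (1 + d) := by
  simp only [blk, Matrix.fromBlocks_transpose, Matrix.fromBlocks_multiply, Matrix.fromBlocks_inj]
  simp only [Matrix.transpose_add, Matrix.transpose_one, Matrix.transpose_zero, Matrix.transpose_mul,
    Matrix.transpose_transpose, Matrix.add_mul, Matrix.mul_add, Matrix.sub_mul, Matrix.mul_sub,
    Matrix.one_mul, Matrix.mul_one, Matrix.mul_zero, Matrix.zero_mul, Matrix.neg_mul, Matrix.mul_neg,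
    Matrix.mul_assoc]
  refine ⟨?_, ?_, ?_, ?_⟩ <;> abel

lemma real_cong (P : PB ι κ) (h : PE ι κ) (hS : IsUnit (Sm h)) :
    Cong (real P) (real (P + Dm P h + Qm P h h)) :=
  ⟨Sm h, hS, blk_cong P.1.1 P.2.1 h.1.1 h.1.2.1 h.1.2.2 h.2.1,
    blk_cong P.1.2 P.2.2 h.1.1 h.1.2.1 h.1.2.2 h.2.2⟩

attribute [local instance] Matrix.normedAddCommGroup Matrix.normedSpace

lemma orbit_nhds (P : PB ι κ) (hP : Function.Surjective (Dm P)) :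
    ∀ᶠ P' in nhds P, Cong (real P) (real P') := by
  have hq : Filter.map (fun h => P + Dm P h + Qm P h h) (nhds 0) = nhds P :=
    quad_open P (Dm P) hP (Qm P)
  rw [← hq, Filter.eventually_map]
  have hc : Continuous fun h : PE ι κ => (Sm h).det := by
    unfold Sm
    fun_prop
  have h0 : (Sm (0 : PE ι κ)).det ≠ 0 := by
    simp [Sm]
  filter_upwards [hc.continuousAt.eventually_ne h0] with h hh
  exact real_cong P h ((Matrix.isUnit_iff_isUnit_det _).2 (isUnit_iff_ne_zero.2 hh))

lemma dense_main (W P : PB ι κ) (hW : Function.Surjective (Dm W)) :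
    real P ∈ closure {Q | Cong (real W) Q} := by
  let γ : ℂ → PB ι κ := fun t => (1 - t) • P + t • W
  have hγ : Continuous γ := by fun_prop
  have hγ0 : γ 0 = P := by simp [γ]
  have hγ1 : γ 1 = W := by simp [γ]
  have hfin := surj_cofinite (fun t => Dm (γ t)) (by
    intro t
    rw [hγ0, hγ1]
    ext h <;> simp [γ, Dm, Matrix.mul_add, Matrix.add_mul] <;> ring) (by
    change Function.Surjective (Dm (γ 1))
    rw [hγ1]; exact hW)
  set T := {t | ¬ Function.Surjective (Dm (γ t))} with hT
  have hconn : IsPreconnected Tᶜ :=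
    (hfin.countable.isPathConnected_compl_of_one_lt_rank (E := ℂ)
      (by rw [Complex.rank_real_complex]; norm_num)).isConnected.isPreconnected
  have h1 : (1 : ℂ) ∈ Tᶜ := by simp [hT, hγ1, hW]
  have hall : ∀ t ∈ Tᶜ, Cong (real W) (real (γ t)) := by
    intro t ht
    have := hconn.induction₂ (fun s t => Cong (real (γ s)) (real (γ t))) (by
      intro s hs
      apply Filter.Eventually.filter_mono nhdsWithin_le_nhds
      apply hγ.continuousAt.eventually (orbit_nhds (γ s) (by simpa [hT] using hs)))
      (fun _ _ _ _ _ _ h h' => h.trans h') (fun _ _ _ _ h => h.symm) h1 ht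
    rwa [hγ1] at this
  have hreal : Continuous fun t => real (γ t) := by
    unfold real blk
    fun_prop
  have hd : (0 : ℂ) ∈ closure Tᶜ := (hfin.countable.dense_compl ℂ) 0
  have := image_closure_subset_closure_image hreal (Set.mem_image_of_mem _ hd)
  rw [hγ0] at this
  refine closure_mono ?_ this
  rintro _ ⟨t, ht, rfl⟩
  exact hall t ht

end DensePart

section SurjPart

variable {J : Type*} [Fintype J] [DecidableEq J] (k : J → ℕ)

abbrev Ix := Σ a : J, Fin (k a)
abbrev Kx := Σ a : J, Fin (k a + 1)

noncomputable def CF : Matrix (Ix k) (Kx k) ℂ := Matrix.blockDiagonal' (fun a => Fmat (k a))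
noncomputable def CG : Matrix (Ix k) (Kx k) ℂ := Matrix.blockDiagonal' (fun a => Gmat (k a))

variable {k} in
/-- extension by zero -/
def ex (f : Ix k → ℂ) (a : J) (i : ℕ) : ℂ := if h : i < k a then f ⟨a, ⟨i, h⟩⟩ else 0

variable {k}

lemma sumCF_zero (f : Ix k → ℂ) (a : J) : ∑ i, CF k i ⟨a, 0⟩ * f i = 0 := by
  apply Finset.sum_eq_zero
  rintro ⟨b, i⟩ -
  by_cases h : b = a
  · subst h
    simp [CF, Matrix.blockDiagonal'_apply, Fmat]
  · simp [CF, Matrix.blockDiagonal'_apply, h]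

lemma sumCF_succ (f : Ix k → ℂ) (a : J) (l : Fin (k a)) :
    ∑ i, CF k i ⟨a, l.succ⟩ * f i = f ⟨a, l⟩ := by
  rw [Finset.sum_eq_single ⟨a, l⟩]
  · simp [CF, Matrix.blockDiagonal'_apply, Fmat]
  · rintro ⟨b, i⟩ - hne
    by_cases h : b = a
    · subst h
      have : (l : ℕ) ≠ i := by
        intro h
        exact hne (by rw [Fin.ext h])
      simp [CF, Matrix.blockDiagonal'_apply, Fmat, this]
    · simp [CF, Matrix.blockDiagonal'_apply, h]
  · simp

lemma sumCG (f : Ix k → ℂ) (a : J) (l : Fin (k a + 1)) :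
    ∑ i, CG k i ⟨a, l⟩ * f i = ex f a l := by
  unfold ex
  split_ifs with h
  · rw [Finset.sum_eq_single ⟨a, ⟨l, h⟩⟩]
    · simp [CG, Matrix.blockDiagonal'_apply, Gmat]
    · rintro ⟨b, i⟩ - hne
      by_cases h : b = a
      · subst h
        have : (l : ℕ) ≠ i := by
          intro h
          exact hne (by congr 1; exact Fin.ext h.symm)
        simp [CG, Matrix.blockDiagonal'_apply, Gmat, this]
      · simp [CG, Matrix.blockDiagonal'_apply, h]
    · simp
  · apply Finset.sum_eq_zero
    rintro ⟨b, i⟩ -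
    by_cases hb : b = a
    · subst hb
      have : (l : ℕ) ≠ i := by omega
      simp [CG, Matrix.blockDiagonal'_apply, Gmat, this]
    · simp [CG, Matrix.blockDiagonal'_apply, hb]

lemma rowCF (g : Kx k → ℂ) (a : J) (i : Fin (k a)) :
    ∑ c, CF k ⟨a, i⟩ c * g c = g ⟨a, i.succ⟩ := by
  rw [Finset.sum_eq_single ⟨a, i.succ⟩]
  · simp [CF, Matrix.blockDiagonal'_apply, Fmat]
  · rintro ⟨b, c⟩ - hne
    by_cases h : a = b
    · subst h
      have : (c : ℕ) ≠ i + 1 := by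
        intro h
        exact hne (by congr 1; exact Fin.ext (by simpa using h))
      simp [CF, Matrix.blockDiagonal'_apply, Fmat, this]
    · simp [CF, Matrix.blockDiagonal'_apply, h]
  · simp

lemma rowCG (g : Kx k → ℂ) (a : J) (i : Fin (k a)) :
    ∑ c, CG k ⟨a, i⟩ c * g c = g ⟨a, i.castSucc⟩ := by
  rw [Finset.sum_eq_single ⟨a, i.castSucc⟩]
  · simp [CG, Matrix.blockDiagonal'_apply, Gmat]
  · rintro ⟨b, c⟩ - hne
    by_cases h : a = b
    · subst h
      have : (c : ℕ) ≠ i := by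
        intro h
        exact hne (by congr 1; exact Fin.ext (by simpa using h))
      simp [CG, Matrix.blockDiagonal'_apply, Gmat, this]
    · simp [CG, Matrix.blockDiagonal'_apply, h]
  · simp

lemma ex_rel (f g : Ix k → ℂ) (h : ∀ c, ∑ i, CF k i c * f i + ∑ i, CG k i c * g i = 0) (a : J) :
    ex g a 0 = 0 ∧ ∀ l, ex g a (l + 1) = - ex f a l := by
  constructor
  · have := h ⟨a, 0⟩
    rw [sumCF_zero, sumCG] at this
    simpa using this
  · intro l
    by_cases hl : l < k a
    · have := h ⟨a, (⟨l, hl⟩ : Fin (k a)).succ⟩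
      rw [sumCF_succ, sumCG] at this
      have h2 : ex f a l = f ⟨a, ⟨l, hl⟩⟩ := by simp [ex, hl]
      rw [h2]
      simp only [Fin.val_succ] at this
      linear_combination this
    · have h3 : ¬ (l + 1 < k a) := by omega
      simp [ex, hl, h3]

lemma pq_zero (p q : Ix k → Ix k → ℂ) (hp : ∀ i j, p i j = - p j i) (hq : ∀ i j, q i j = - q j i)
    (h : ∀ c j, ∑ i, CF k i c * p i j + ∑ i, CG k i c * q i j = 0) : p = 0 ∧ q = 0 := by
  let P : J → ℕ → J → ℕ → ℂ := fun a i b j => ex (fun x => ex (fun y => p x y) b j) a i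
  let Q : J → ℕ → J → ℕ → ℂ := fun a i b j => ex (fun x => ex (fun y => q x y) b j) a i
  have sP : ∀ a i b j, P a i b j = - P b j a i := by
    intro a i b j
    simp only [P, ex]
    split_ifs <;> first | exact hp _ _ | simp
  have sQ : ∀ a i b j, Q a i b j = - Q b j a i := by
    intro a i b j
    simp only [Q, ex]
    split_ifs <;> first | exact hq _ _ | simp
  have hrel : ∀ a b j, Q a 0 b j = 0 ∧ ∀ l, Q a (l + 1) b j = - P a l b j := by
    intro a b j
    apply ex_rel
    intro c
    by_cases hj : j < k b
    · simpa [ex, hj] using h c ⟨b, ⟨j, hj⟩⟩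
    · simp [ex, hj]
  have hQ : ∀ i a b j, Q a i b j = 0 := by
    intro i
    induction i with
    | zero => exact fun a b j => (hrel a b j).1
    | succ i ih =>
      intro a b j
      rw [(hrel a b j).2, sP, neg_neg]
      have := (hrel b a i).2 j
      have h2 : P b j a i = - Q b (j + 1) a i := by rw [this, neg_neg]
      rw [h2, sQ, ih, neg_zero, neg_zero]
  have hP : ∀ i a b j, P a i b j = 0 := by
    intro i a b j
    have := (hrel a b j).2 i
    rw [hQ] at this
    simpa using this.symm
  constructor
  · funext ⟨a, i⟩ ⟨b, j⟩
    simpa [P, ex] using hP i a b j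
  · funext ⟨a, i⟩ ⟨b, j⟩
    simpa [Q, ex] using hQ i a b j

lemma uv_zero (hk : ∀ a b, k a ≤ k b + 1) (u v : Ix k → Kx k → ℂ)
    (h1 : ∀ c c', ∑ i, CF k i c * u i c' + ∑ i, CG k i c * v i c' = 0)
    (h2 : ∀ i i', ∑ c, CF k i c * u i' c + ∑ c, CG k i c * v i' c = 0) : u = 0 ∧ v = 0 := by
  let U : J → ℕ → (b : J) → Fin (k b + 1) → ℂ := fun a i b c => ex (fun x => u x ⟨b, c⟩) a i
  let V : J → ℕ → (b : J) → Fin (k b + 1) → ℂ := fun a i b c => ex (fun x => v x ⟨b, c⟩) a i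
  have hrel : ∀ a b c, V a 0 b c = 0 ∧ ∀ l, V a (l + 1) b c = - U a l b c := by
    intro a b c
    apply ex_rel
    intro c'
    exact h1 c' ⟨b, c⟩
  have hstep : ∀ a i b (c : Fin (k b)), V a i b c.castSucc = - U a i b c.succ := by
    intro a i b c
    simp only [U, V, ex]
    split_ifs with h
    · have := h2 ⟨b, c⟩ ⟨a, ⟨i, h⟩⟩
      rw [rowCF, rowCG] at this
      linear_combination this
    · simp
  have hdiag : ∀ a i b (c : Fin (k b)), V a (i + 1) b c.succ = V a i b c.castSucc := by
    intro a i b c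
    rw [(hrel a b _).2, hstep]
  have hle : ∀ n a i b (c : Fin (k b + 1)), (c : ℕ) = n → i ≤ n → V a i b c = 0 := by
    intro n
    induction n with
    | zero =>
      intro a i b c hc hi
      obtain rfl : i = 0 := by omega
      exact (hrel a b c).1
    | succ n ih =>
      intro a i b c hc hi
      rcases i with _ | i
      · exact (hrel a b c).1
      · have hn : n < k b := by have := c.2; omega
        obtain rfl : c = (⟨n, hn⟩ : Fin (k b)).succ := Fin.ext (by simpa using hc)
        rw [hdiag]
        exact ih a i b _ (by simp) (by omega)
  have hV : ∀ n a i b (c : Fin (k b + 1)), (c : ℕ) + n = k b → V a i b c = 0 := by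
    intro n
    induction n with
    | zero =>
      intro a i b c hc
      by_cases hi : i < k a
      · have := hk a b
        exact hle _ a i b c rfl (by omega)
      · simp [V, ex, hi]
    | succ n ih =>
      intro a i b c hc
      have hn : (c : ℕ) < k b := by omega
      have hc' : c = (⟨c, hn⟩ : Fin (k b)).castSucc := Fin.ext (by simp)
      rw [hc', ← hdiag]
      exact ih a _ b _ (by simp; omega)
  have hV' : ∀ a i b c, V a i b c = 0 := by
    intro a i b c
    exact hV (k b - c) a i b c (by have := c.2; omega)
  have hU : ∀ a i b c, U a i b c = 0 := by
    intro a i b c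
    have := (hrel a b c).2 i
    rw [hV'] at this
    simpa using this.symm
  constructor
  · funext ⟨a, i⟩ ⟨b, j⟩
    simpa [U, ex] using hU a i b j
  · funext ⟨a, i⟩ ⟨b, j⟩
    simpa [V, ex] using hV' a i b j

lemma lin_mul_single {l n o : Type*} [Fintype l] [Fintype n] [Fintype o] [DecidableEq l] [DecidableEq n]
    [DecidableEq o] (C : Matrix l n ℂ) (ψ : Matrix l o ℂ →ₗ[ℂ] ℂ) (c : n) (j : o) :
    ψ (C * Matrix.single c j (1 : ℂ)) = ∑ i, C i c * ψ (Matrix.single i j (1 : ℂ)) := by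
  have : C * Matrix.single c j (1 : ℂ) = ∑ i, C i c • Matrix.single i j (1 : ℂ) := by
    ext a b
    rw [Matrix.sum_apply, Matrix.mul_apply, Finset.sum_eq_single c, Finset.sum_eq_single a]
    · simp [Matrix.single_apply]
    · intro x _ hx
      simp [Matrix.single_apply, hx]
    · simp
    · intro x _ hx
      simp [Matrix.single_apply, hx.symm]
    · simp
  rw [this, map_sum]
  simp only [map_smul, smul_eq_mul]

lemma lin_single_mul {l n o : Type*} [Fintype l] [Fintype n] [Fintype o] [DecidableEq l] [DecidableEq n]
    [DecidableEq o] (C : Matrix n o ℂ) (ψ : Matrix l o ℂ →ₗ[ℂ] ℂ) (i' : l) (i : n) :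
    ψ (Matrix.single i' i (1 : ℂ) * C) = ∑ c, C i c * ψ (Matrix.single i' c (1 : ℂ)) := by
  have : Matrix.single i' i (1 : ℂ) * C = ∑ c, C i c • Matrix.single i' c (1 : ℂ) := by
    ext a b
    rw [Matrix.sum_apply, Matrix.mul_apply, Finset.sum_eq_single i, Finset.sum_eq_single b]
    · simp [Matrix.single_apply]
    · intro x _ hx
      simp [Matrix.single_apply, hx]
    · simp
    · intro x _ hx
      simp [Matrix.single_apply, hx.symm]
    · simp
  rw [this, map_sum]
  simp only [map_smul, smul_eq_mul]

lemma lin_zero {l n : Type*} [Fintype l] [Fintype n] [DecidableEq l] [DecidableEq n]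
    (ψ : Matrix l n ℂ →ₗ[ℂ] ℂ) (h : ∀ i j, ψ (Matrix.single i j 1) = 0) (M : Matrix l n ℂ) : ψ M = 0 := by
  rw [Matrix.matrix_eq_sum_single M, map_sum]
  apply Finset.sum_eq_zero
  intro i _
  rw [map_sum]
  apply Finset.sum_eq_zero
  intro j _
  have : Matrix.single i j (M i j) = M i j • Matrix.single i j (1 : ℂ) := by simp
  rw [this, map_smul, h, smul_zero]

variable (k) in
noncomputable def W0 : PB (Ix k) (Kx k) := ((0, 0), (CF k, CG k))

lemma W0_surj (hk : ∀ a b, k a ≤ k b + 1) : Function.Surjective (Dm (W0 k)) := by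
  rw [← LinearMap.range_eq_top]
  by_contra hne
  obtain ⟨φ, hφ0, hφ⟩ := Submodule.exists_le_ker_of_lt_top _ (lt_top_iff_ne_top.2 hne)
  have hr : ∀ h, φ (Dm (W0 k) h) = 0 := fun h => hφ ⟨h, rfl⟩
  let p : Matrix (Ix k) (Ix k) ℂ →ₗ[ℂ] ℂ := φ ∘ₗ LinearMap.inl ℂ _ _ ∘ₗ LinearMap.inl ℂ _ _
  let q : Matrix (Ix k) (Ix k) ℂ →ₗ[ℂ] ℂ := φ ∘ₗ LinearMap.inl ℂ _ _ ∘ₗ LinearMap.inr ℂ _ _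
  let u : Matrix (Ix k) (Kx k) ℂ →ₗ[ℂ] ℂ := φ ∘ₗ LinearMap.inr ℂ _ _ ∘ₗ LinearMap.inl ℂ _ _
  let v : Matrix (Ix k) (Kx k) ℂ →ₗ[ℂ] ℂ := φ ∘ₗ LinearMap.inr ℂ _ _ ∘ₗ LinearMap.inr ℂ _ _
  have hφe : ∀ K L M N, φ ((K, L), (M, N)) = p K + q L + u M + v N := by
    intro K L M N
    simp only [p, q, u, v, LinearMap.comp_apply, ← map_add]
    congr 1
    simp
  have hr' : ∀ (x : Matrix (Ix k) (Ix k) ℂ) (z : Matrix (Kx k) (Ix k) ℂ) (d : Matrix (Kx k) (Kx k) ℂ)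
      (Y Y' : Matrix (Ix k) (Ix k) ℂ), p (CF k * z + Y + Yᵀ) + q (CG k * z + Y' + Y'ᵀ) +
        u (xᵀ * CF k + CF k * d) + v (xᵀ * CG k + CG k * d) = 0 := by
    intro x z d Y Y'
    have := hr ((x, z, d), (Y, Y'))
    simp only [Dm, W0, LinearMap.coe_mk, AddHom.coe_mk, Matrix.mul_zero, Matrix.zero_mul, zero_add,
      hφe] at this
    exact this
  have hpq := pq_zero (fun i j => p (Matrix.single i j 1)) (fun i j => q (Matrix.single i j 1))
    (by
      intro i j
      have := hr' 0 0 0 (Matrix.single i j 1) 0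
      simp at this
      linear_combination this)
    (by
      intro i j
      have := hr' 0 0 0 0 (Matrix.single i j 1)
      simp at this
      linear_combination this)
    (by
      intro c j
      have := hr' 0 (Matrix.single c j 1) 0 0 0
      simpa [lin_mul_single] using this)
  have huv := uv_zero hk (fun i j => u (Matrix.single i j 1)) (fun i j => v (Matrix.single i j 1))
    (by
      intro c j
      have := hr' 0 0 (Matrix.single c j 1) 0 0
      simpa [lin_mul_single] using this)
    (by
      intro i i'
      have := hr' (Matrix.single i i' 1) 0 0 0 0
      simpa [lin_single_mul] using this)
  apply hφ0
  apply LinearMap.ext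
  rintro ⟨⟨K, L⟩, ⟨M, N⟩⟩
  rw [hφe, lin_zero p (fun i j => congrFun (congrFun hpq.1 i) j),
    lin_zero q (fun i j => congrFun (congrFun hpq.2 i) j),
    lin_zero u (fun i j => congrFun (congrFun huv.1 i) j),
    lin_zero v (fun i j => congrFun (congrFun huv.2 i) j)]
  simp

end SurjPart

section Assembly

open Module

lemma Wpar_le (m r : ℕ) (a b : Fin (m - 2 * r)) : Wpar m r a ≤ Wpar m r b + 1 := by
  unfold Wpar
  split_ifs <;> omega

lemma Wpar_sum (m r : ℕ) (hrm : 2 * r < m) : ∑ a, Wpar m r a = r := by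
  have h : ∀ a : Fin (m - 2 * r), Wpar m r a =
      r / (m - 2 * r) + if (a : ℕ) < r % (m - 2 * r) then 1 else 0 := by
    intro a
    unfold Wpar
    split_ifs <;> rfl
  simp only [h]
  rw [Finset.sum_add_distrib, Fin.sum_univ_eq_sum_range (fun a => if a < r % (m - 2 * r) then 1 else 0)]
  have hlt : r % (m - 2 * r) < m - 2 * r := Nat.mod_lt _ (by omega)
  have h2 : (Finset.range (m - 2 * r)).filter (fun a => a < r % (m - 2 * r)) =
      Finset.range (r % (m - 2 * r)) := by
    ext a
    simp
    omega
  rw [← Finset.sum_filter, h2]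
  simp
  exact Nat.div_add_mod r (m - 2 * r)

def wx (m r : ℕ) (i : Fin (m - 2 * r)) :
    Fin (Wpar m r i) ⊕ Fin (Wpar m r i + 1) ≃ Fin (Wsize m r i) :=
  finSumFinEquiv (m := Wpar m r i) (n := Wpar m r i + 1)

def sg (m r : ℕ) : (Σ i : Fin (m - 2 * r), Fin (Wsize m r i)) ≃ Ix (Wpar m r) ⊕ Kx (Wpar m r) :=
  (Equiv.sigmaCongrRight (fun i => (wx m r i).symm)).trans
    (Equiv.sigmaSumDistrib _ _)

lemma sg_inl (m r : ℕ) (i : Fin (m - 2 * r)) (x : Fin (Wpar m r i)) :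
    sg m r ⟨i, wx m r i (Sum.inl x)⟩ = Sum.inl ⟨i, x⟩ := by
  simp [sg, Equiv.sigmaSumDistrib]

lemma sg_inr (m r : ℕ) (i : Fin (m - 2 * r)) (x : Fin (Wpar m r i + 1)) :
    sg m r ⟨i, wx m r i (Sum.inr x)⟩ = Sum.inr ⟨i, x⟩ := by
  simp [sg, Equiv.sigmaSumDistrib]

lemma MmatA_eq (m r : ℕ) (i : Fin (m - 2 * r)) (x y : Fin (Wpar m r i) ⊕ Fin (Wpar m r i + 1)) :
    WblkA m r i (wx m r i x) (wx m r i y) =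
      Matrix.fromBlocks 0 (Fmat (Wpar m r i)) (-(Fmat (Wpar m r i))ᵀ) 0 x y := by
  change Matrix.fromBlocks 0 (Fmat (Wpar m r i)) (-(Fmat (Wpar m r i))ᵀ) 0
    ((wx m r i).symm (wx m r i x)) ((wx m r i).symm (wx m r i y)) = _
  rw [Equiv.symm_apply_apply, Equiv.symm_apply_apply]

lemma MmatB_eq (m r : ℕ) (i : Fin (m - 2 * r)) (x y : Fin (Wpar m r i) ⊕ Fin (Wpar m r i + 1)) :
    WblkB m r i (wx m r i x) (wx m r i y) =
      Matrix.fromBlocks 0 (Gmat (Wpar m r i)) (-(Gmat (Wpar m r i))ᵀ) 0 x y := by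
  change Matrix.fromBlocks 0 (Gmat (Wpar m r i)) (-(Gmat (Wpar m r i))ᵀ) 0
    ((wx m r i).symm (wx m r i x)) ((wx m r i).symm (wx m r i y)) = _
  rw [Equiv.symm_apply_apply, Equiv.symm_apply_apply]

lemma WA_eq (m r : ℕ) : Matrix.blockDiagonal' (WblkA m r) =
    (blk 0 (CF (Wpar m r))).submatrix (sg m r) (sg m r) := by
  ext ⟨i, x⟩ ⟨j, y⟩
  obtain ⟨x, rfl⟩ := (wx m r i).surjective x
  obtain ⟨y, rfl⟩ := (wx m r j).surjective y
  rw [Matrix.submatrix_apply]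
  by_cases h : i = j
  · subst h
    rw [Matrix.blockDiagonal'_apply_eq, MmatA_eq]
    rcases x with x | x <;> rcases y with y | y <;>
      simp only [sg_inl, sg_inr] <;> simp [blk, CF]
  · rw [Matrix.blockDiagonal'_apply_ne _ _ _ h]
    rcases x with x | x <;> rcases y with y | y <;>
      simp only [sg_inl, sg_inr] <;>
      simp [blk, CF, Matrix.blockDiagonal'_apply_ne, h, Ne.symm h]

lemma WB_eq (m r : ℕ) : Matrix.blockDiagonal' (WblkB m r) =
    (blk 0 (CG (Wpar m r))).submatrix (sg m r) (sg m r) := by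
  ext ⟨i, x⟩ ⟨j, y⟩
  obtain ⟨x, rfl⟩ := (wx m r i).surjective x
  obtain ⟨y, rfl⟩ := (wx m r j).surjective y
  rw [Matrix.submatrix_apply]
  by_cases h : i = j
  · subst h
    rw [Matrix.blockDiagonal'_apply_eq, MmatB_eq]
    rcases x with x | x <;> rcases y with y | y <;>
      simp only [sg_inl, sg_inr] <;> simp [blk, CG]
  · rw [Matrix.blockDiagonal'_apply_ne _ _ _ h]
    rcases x with x | x <;> rcases y with y | y <;>
      simp only [sg_inl, sg_inr] <;>
      simp [blk, CG, Matrix.blockDiagonal'_apply_ne, h, Ne.symm h]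

variable {ι κ : Type*} [Fintype ι] [Fintype κ] [DecidableEq ι] [DecidableEq κ]

lemma blk_skew (K : Matrix ι ι ℂ) (C : Matrix ι κ ℂ) : (blk K C)ᵀ = - blk K C := by
  simp [blk, Matrix.fromBlocks_transpose, Matrix.fromBlocks_neg]

lemma blk_rank (C : Matrix ι κ ℂ) : (blk 0 C).rank ≤ 2 * Fintype.card ι := by
  have : blk 0 C = (Matrix.fromBlocks 1 0 0 (-Cᵀ) : Matrix (ι ⊕ κ) (ι ⊕ ι) ℂ) *
      (Matrix.fromBlocks 0 C 1 0 : Matrix (ι ⊕ ι) (ι ⊕ κ) ℂ) := by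
    simp [blk, Matrix.fromBlocks_multiply]
  rw [this]
  refine (Matrix.rank_mul_le_left _ _).trans ((Matrix.rank_le_card_width _).trans ?_)
  simp
  omega

lemma skew_dot {m : ℕ} (A : Matrix (Fin m) (Fin m) ℂ) (hA : Aᵀ = -A) (x : Fin m → ℂ) :
    x ⬝ᵥ A *ᵥ x = 0 := by
  have h : x ⬝ᵥ A *ᵥ x = - (x ⬝ᵥ A *ᵥ x) := by
    conv_lhs => rw [Matrix.dotProduct_mulVec, ← Matrix.mulVec_transpose, hA, dotProduct_comm]
    simp [Matrix.neg_mulVec]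
  have : (2 : ℂ) * (x ⬝ᵥ A *ᵥ x) = 0 := by linear_combination h
  simpa using this

/-- isotropic normal form -/
lemma exists_block_form {m r : ℕ} (e : Fin m ≃ ι ⊕ κ) (hι : Fintype.card ι = r)
    (A B : Matrix (Fin m) (Fin m) ℂ) (hA : Aᵀ = -A) (hB : Bᵀ = -B)
    (hr : ∀ μ : ℂ, (A - μ • B).rank ≤ 2 * r) :
    ∃ (T : Matrix (Fin m) (Fin m) ℂ) (P : PB ι κ), IsUnit T ∧
      Tᵀ * A * T = (real P).1.submatrix e e ∧ Tᵀ * B * T = (real P).2.submatrix e e := by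
  have hcard : m = r + Fintype.card κ := by
    have := Fintype.card_congr e
    simp [hι] at this
    exact this
  let A' : (Fin m → ℂ) →ₗ[ℂ] Dual ℂ (Fin m → ℂ) := Matrix.toLinearMap₂' ℂ A
  let B' : (Fin m → ℂ) →ₗ[ℂ] Dual ℂ (Fin m → ℂ) := Matrix.toLinearMap₂' ℂ B
  have hA' : ∀ x y, A' x y = x ⬝ᵥ A *ᵥ y := fun x y => Matrix.toLinearMap₂'_apply' A x y
  have hB' : ∀ x y, B' x y = x ⬝ᵥ B *ᵥ y := fun x y => Matrix.toLinearMap₂'_apply' B x y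
  obtain ⟨L, hL, hLd⟩ := iso_main r A' B' (fun x => by rw [hA', skew_dot A hA])
    (fun x => by rw [hB', skew_dot B hB]) (by
      intro μ
      have h1 : LinearMap.ker (A - μ • B)ᵀ.mulVecLin ≤ LinearMap.ker (A' - μ • B') := by
        intro x hx
        rw [LinearMap.mem_ker, Matrix.mulVecLin_apply] at hx
        rw [LinearMap.mem_ker]
        refine LinearMap.ext fun y => ?_
        have : (A' - μ • B') x y = x ⬝ᵥ (A - μ • B) *ᵥ y := by
          simp [hA', hB', Matrix.sub_mulVec, Matrix.smul_mulVec]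
        have h2 : (A' - μ • B') x y = 0 := by
          rw [this, Matrix.dotProduct_mulVec, ← Matrix.mulVec_transpose, hx, zero_dotProduct]
        exact h2
      have h2 := LinearMap.finrank_range_add_finrank_ker (A - μ • B)ᵀ.mulVecLin
      have h3 := Submodule.finrank_mono h1
      have h4 := hr μ
      rw [← Matrix.rank_transpose, Matrix.rank] at h4
      omega)
  rw [finrank_fin_fun] at hLd
  -- linearly independent family
  have hκ : Fintype.card κ ≤ finrank ℂ L := by omega
  let f : κ → (Fin m → ℂ) := fun c => (finBasis ℂ L (Fin.castLE hκ (Fintype.equivFin κ c)) : Fin m → ℂ)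
  have hfL : ∀ c, f c ∈ L := fun c => Subtype.property _
  have hf : LinearIndependent ℂ f := by
    have h1 := (finBasis ℂ L).linearIndependent.map' L.subtype (Submodule.ker_subtype L)
    exact h1.comp (fun c => Fin.castLE hκ (Fintype.equivFin κ c))
      ((Fin.castLE_injective hκ).comp (Fintype.equivFin κ).injective)
  obtain ⟨C, hC⟩ := Submodule.exists_isCompl (Submodule.span ℂ (Set.range f))
  have hCd := Submodule.finrank_add_eq_of_isCompl hC
  rw [finrank_span_eq_card hf, finrank_fin_fun] at hCd
  have hCr : finrank ℂ C = Fintype.card ι := by omega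
  let bC := (finBasisOfFinrankEq ℂ C hCr).reindex (Fintype.equivFin ι).symm
  let g : ι → (Fin m → ℂ) := fun i => (bC i : Fin m → ℂ)
  have hg : LinearIndependent ℂ g :=
    bC.linearIndependent.map' C.subtype (Submodule.ker_subtype C)
  have hgC : Submodule.span ℂ (Set.range g) ≤ C := by
    rw [Submodule.span_le]
    rintro _ ⟨i, rfl⟩
    exact Subtype.property _
  have hfg : LinearIndependent ℂ (Sum.elim g f) :=
    hg.sum_type hf (hC.disjoint.symm.mono_left hgC)
  let T : Matrix (Fin m) (Fin m) ℂ := Matrix.of fun i j => Sum.elim g f (e j) i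
  have hT : IsUnit T := by
    rw [← Matrix.linearIndependent_cols_iff_isUnit]
    exact hfg.comp e e.injective
  have hent : ∀ (M : Matrix (Fin m) (Fin m) ℂ) i j, (Tᵀ * M * T) i j =
      Sum.elim g f (e i) ⬝ᵥ M *ᵥ Sum.elim g f (e j) := by
    intro M i j
    rw [Matrix.mul_assoc, Matrix.mul_apply]
    rfl
  have key : ∀ (M : Matrix (Fin m) (Fin m) ℂ), Mᵀ = -M → (∀ x ∈ L, ∀ y ∈ L, x ⬝ᵥ M *ᵥ y = 0) →
      Tᵀ * M * T = (blk ((1/2 : ℂ) • ((Tᵀ * M * T).submatrix e.symm e.symm).toBlocks₁₁)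
        ((Tᵀ * M * T).submatrix e.symm e.symm).toBlocks₁₂).submatrix e e := by
    intro M hM hML
    set N := (Tᵀ * M * T).submatrix e.symm e.symm with hN
    have hNs : Nᵀ = -N := by
      rw [hN, Matrix.transpose_submatrix, Matrix.transpose_mul, Matrix.transpose_mul,
        Matrix.transpose_transpose, hM]
      ext i j
      simp [Matrix.mul_assoc]
    have h1 : Tᵀ * M * T = N.submatrix e e := by
      ext i j
      simp [hN]
    rw [h1]
    congr 1
    have hs : ∀ i j, N j i = - N i j := fun i j => congrFun (congrFun hNs i) j
    ext i j
    rcases i with i | i <;> rcases j with j | j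
    · simp [blk, Matrix.toBlocks₁₁]
      rw [hs (Sum.inl i)]
      ring
    · simp [blk, Matrix.toBlocks₁₂]
    · simp [blk, Matrix.toBlocks₁₂]
      rw [hs]
    · simp only [blk, Matrix.fromBlocks_apply₂₂, Matrix.zero_apply, hN, Matrix.submatrix_apply]
      rw [hent]
      simpa using hML _ (hfL i) _ (hfL j)
  refine ⟨T, ((_, _), (_, _)), hT, key A hA (fun x hx y hy => by rw [← hA']; exact (hL x hx y hy).1),
    key B hB (fun x hx y hy => by rw [← hB']; exact (hL x hx y hy).2)⟩

lemma cong_inv {m : ℕ} (T M : Matrix (Fin m) (Fin m) ℂ) (hT : IsUnit T) :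
    T⁻¹ᵀ * (Tᵀ * M * T) * T⁻¹ = M := by
  have hd := (Matrix.isUnit_iff_isUnit_det T).1 hT
  have h5 : T⁻¹ᵀ * Tᵀ = 1 := by
    rw [← Matrix.transpose_mul, Matrix.mul_nonsing_inv _ hd, Matrix.transpose_one]
  calc _ = (T⁻¹ᵀ * Tᵀ) * M * (T * T⁻¹) := by simp only [Matrix.mul_assoc]
    _ = M := by rw [h5, Matrix.mul_nonsing_inv _ hd, Matrix.one_mul, Matrix.mul_one]

end Assembly

/-- The set of m×m skew-symmetric pencils of normal rank at most `2r` is the closure of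
the congruence orbit of the generic pencil `W` made of `t` blocks `M_{α+1}` and
`m − 2r − t` blocks `M_α`. -/
theorem skew_symmetric_pencil_bounded_rank_eq_closure_orbit (m r : ℕ)
    (h2 : 2 ≤ 2 * r) (hrm : 2 * r ≤ m - 1) :
    ∃ e : Fin m ≃ (Σ i : Fin (m - 2 * r), Fin (Wsize m r i)),
      {AB : Matrix (Fin m) (Fin m) ℂ × Matrix (Fin m) (Fin m) ℂ |
        AB.1ᵀ = -AB.1 ∧ AB.2ᵀ = -AB.2 ∧ normalRank (pencilPoly AB.1 AB.2) ≤ 2 * r} =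
      closure {AB | ∃ S : Matrix (Fin m) (Fin m) ℂ, IsUnit S ∧
        AB.1 = Sᵀ * ((Matrix.blockDiagonal' (WblkA m r)).submatrix e e) * S ∧
        AB.2 = Sᵀ * ((Matrix.blockDiagonal' (WblkB m r)).submatrix e e) * S} := by
  have hlt : 2 * r < m := by omega
  have hι : Fintype.card (Ix (Wpar m r)) = r := by
    rw [Fintype.card_sigma]; simpa using Wpar_sum m r hlt
  have hκ : Fintype.card (Kx (Wpar m r)) = r + (m - 2 * r) := by
    rw [Fintype.card_sigma]
    simp only [Fintype.card_fin, Finset.sum_add_distrib, Wpar_sum m r hlt]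
    simp
  let e' : Fin m ≃ Ix (Wpar m r) ⊕ Kx (Wpar m r) := Fintype.equivOfCardEq (by
    rw [Fintype.card_sum, hι, hκ, Fintype.card_fin]; omega)
  refine ⟨e'.trans (sg m r).symm, ?_⟩
  have hWA : (Matrix.blockDiagonal' (WblkA m r)).submatrix (e'.trans (sg m r).symm)
      (e'.trans (sg m r).symm) = (blk 0 (CF (Wpar m r))).submatrix e' e' := by
    rw [WA_eq]; ext i j; simp
  have hWB : (Matrix.blockDiagonal' (WblkB m r)).submatrix (e'.trans (sg m r).symm)
      (e'.trans (sg m r).symm) = (blk 0 (CG (Wpar m r))).submatrix e' e' := by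
    rw [WB_eq]; ext i j; simp
  rw [hWA, hWB]
  apply Set.Subset.antisymm
  · rintro ⟨A, B⟩ ⟨hA, hB, hn⟩
    obtain ⟨T, P, hT, h1, h2⟩ := exists_block_form e' hι A B hA hB (rank_le_of_normalRank A B hn)
    have hd := dense_main (W0 (Wpar m r)) P (W0_surj (Wpar_le m r))
    let Φ : Matrix (Ix (Wpar m r) ⊕ Kx (Wpar m r)) (Ix (Wpar m r) ⊕ Kx (Wpar m r)) ℂ ×
        Matrix (Ix (Wpar m r) ⊕ Kx (Wpar m r)) (Ix (Wpar m r) ⊕ Kx (Wpar m r)) ℂ →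
        Matrix (Fin m) (Fin m) ℂ × Matrix (Fin m) (Fin m) ℂ :=
      fun X => (T⁻¹ᵀ * X.1.submatrix e' e' * T⁻¹, T⁻¹ᵀ * X.2.submatrix e' e' * T⁻¹)
    have hΦ : Continuous Φ := by fun_prop
    have hΦP : Φ (real P) = (A, B) := by
      simp only [Φ]
      rw [← h1, ← h2, cong_inv T A hT, cong_inv T B hT]
    rw [← hΦP]
    refine map_mem_closure hΦ hd ?_
    rintro X ⟨S, hS, hX1, hX2⟩
    have hsub : ∀ M : Matrix (Ix (Wpar m r) ⊕ Kx (Wpar m r)) (Ix (Wpar m r) ⊕ Kx (Wpar m r)) ℂ,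
        T⁻¹ᵀ * (Sᵀ * M * S).submatrix e' e' * T⁻¹ =
        (S.submatrix e' e' * T⁻¹)ᵀ * M.submatrix e' e' * (S.submatrix e' e' * T⁻¹) := by
      intro M
      rw [← Matrix.submatrix_mul_equiv _ _ e' e' e', ← Matrix.submatrix_mul_equiv _ _ e' e' e',
        Matrix.transpose_mul, Matrix.transpose_submatrix]
      simp only [Matrix.mul_assoc]
    refine ⟨S.submatrix e' e' * T⁻¹, ?_, ?_, ?_⟩
    · refine IsUnit.mul ((Matrix.isUnit_submatrix_equiv e' e').2 hS) ?_
      rw [Matrix.isUnit_iff_isUnit_det]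
      exact Matrix.isUnit_nonsing_inv_det _ ((Matrix.isUnit_iff_isUnit_det T).1 hT)
    · simp only [Φ]; rw [hX1]; exact hsub _
    · simp only [Φ]; rw [hX2]; exact hsub _
  · have hskew : ∀ (S : Matrix (Fin m) (Fin m) ℂ) (C : Matrix (Ix (Wpar m r)) (Kx (Wpar m r)) ℂ),
        (Sᵀ * (blk 0 C).submatrix e' e' * S)ᵀ = -(Sᵀ * (blk 0 C).submatrix e' e' * S) := by
      intro S C
      rw [Matrix.transpose_mul, Matrix.transpose_mul, Matrix.transpose_transpose,
        Matrix.transpose_submatrix, blk_skew, Matrix.mul_assoc]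
      have : (-blk 0 C).submatrix e' e' = -((blk 0 C).submatrix e' e') := rfl
      rw [this, Matrix.neg_mul, Matrix.mul_neg]
    intro AB hAB
    have hc1 : IsClosed {AB : Matrix (Fin m) (Fin m) ℂ × Matrix (Fin m) (Fin m) ℂ |
        AB.1ᵀ = -AB.1 ∧ AB.2ᵀ = -AB.2} :=
      (isClosed_eq (by fun_prop) (by fun_prop)).inter (isClosed_eq (by fun_prop) (by fun_prop))
    have h1 := closure_minimal (t := {AB : Matrix (Fin m) (Fin m) ℂ × Matrix (Fin m) (Fin m) ℂ |
        AB.1ᵀ = -AB.1 ∧ AB.2ᵀ = -AB.2}) (by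
      rintro ⟨A, B⟩ ⟨S, hS, hA, hB⟩
      simp only at hA hB
      subst hA hB
      exact ⟨hskew S _, hskew S _⟩) hc1 hAB
    refine ⟨h1.1, h1.2, normalRank_le_of_closure _ ?_ AB hAB⟩
    rintro ⟨A, B⟩ ⟨S, hS, hA, hB⟩ μ
    simp only at hA hB
    subst hA hB
    have : Sᵀ * (blk 0 (CF (Wpar m r))).submatrix e' e' * S -
        μ • (Sᵀ * (blk 0 (CG (Wpar m r))).submatrix e' e' * S) =
        Sᵀ * (blk 0 (CF (Wpar m r) - μ • CG (Wpar m r))).submatrix e' e' * S := by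
      have h3 : (blk 0 (CF (Wpar m r) - μ • CG (Wpar m r))).submatrix e' e' =
          (blk 0 (CF (Wpar m r))).submatrix e' e' - μ • (blk 0 (CG (Wpar m r))).submatrix e' e' := by
        have h4 : blk 0 (CF (Wpar m r) - μ • CG (Wpar m r)) =
            blk 0 (CF (Wpar m r)) - μ • blk 0 (CG (Wpar m r)) := by
          ext i j
          rcases i with i | i <;> rcases j with j | j <;> simp [blk]
          ring
        rw [h4]; rfl
      rw [h3, Matrix.mul_sub, Matrix.sub_mul, Matrix.mul_smul, Matrix.smul_mul]
    simp only
    rw [this]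
    refine (Matrix.rank_mul_le_left _ _).trans ((Matrix.rank_mul_le_right _ _).trans ?_)
    rw [Matrix.rank_submatrix]
    exact (blk_rank _).trans (by rw [hι])
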